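/- Let G(t,x) = (1/N) log ∫ exp( h(σ) + t N ξ(σσᵀ/N) + x·(σσᵀ) ) dP(σ) for (t,x) ∈ ℝ × S^D. Assume in addition that the restriction of ξ to the set of symmetric positive semidefinite matrices is convex, and that ξ is L-Lipschitz (Frobenius norm) on the set of symmetric positive semidefinite matrices a with |a| ≤ 1. Then at every (t,x) ∈ ℝ × S^D: 0 ≤ ∂_t G(t,x) − ξ( ∇_x G(t,x) ) ≤ L ( N^{-1} Δ_x G(t,x) )^{1/2}, where ∇_x G(t,x) is the gradient of G(t,·) at x with respect to the Frobenius inner product on S^D and Δ_x G(t,x) is the sum over an orthonormal basis (e_i) of S^D of the second derivatives of G(t,·) at x along the directions e_i. -/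

import Mathlib

open Matrix MeasureTheory

noncomputable section

instance {m n : Type*} : MeasurableSpace (Matrix m n ℝ) := MeasurableSpace.pi

/-- The energy `h(σ) + t N ξ(σσᵀ/N) + x·(σσᵀ)`, where `x·m = tr(x mᵀ)` is the
Frobenius inner product. -/
def energy {D N : ℕ} (h : Matrix (Fin D) (Fin N) ℝ → ℝ)
    (ξ : Matrix (Fin D) (Fin D) ℝ → ℝ)
    (t : ℝ) (x : Matrix (Fin D) (Fin D) ℝ) (σ : Matrix (Fin D) (Fin N) ℝ) : ℝ :=
  h σ + t * N * ξ ((N : ℝ)⁻¹ • (σ * σᵀ)) + (x * (σ * σᵀ)ᵀ).trace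

/-- The free energy `G(t,x) = (1/N) log ∫ exp(h(σ) + t N ξ(σσᵀ/N) + x·(σσᵀ)) dP(σ)`. -/
def freeEnergy {D N : ℕ} (P : Measure (Matrix (Fin D) (Fin N) ℝ))
    (h : Matrix (Fin D) (Fin N) ℝ → ℝ) (ξ : Matrix (Fin D) (Fin D) ℝ → ℝ)
    (t : ℝ) (x : Matrix (Fin D) (Fin D) ℝ) : ℝ :=
  (N : ℝ)⁻¹ * Real.log (∫ σ, Real.exp (energy h ξ t x σ) ∂P)

/-- The Gibbs average `⟨f⟩_{t,x}`. -/
def gibbs {D N : ℕ} (P : Measure (Matrix (Fin D) (Fin N) ℝ))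
    (h : Matrix (Fin D) (Fin N) ℝ → ℝ) (ξ : Matrix (Fin D) (Fin D) ℝ → ℝ)
    (t : ℝ) (x : Matrix (Fin D) (Fin D) ℝ)
    (f : Matrix (Fin D) (Fin N) ℝ → ℝ) : ℝ :=
  (∫ σ, f σ * Real.exp (energy h ξ t x σ) ∂P) / (∫ σ, Real.exp (energy h ξ t x σ) ∂P)

end


open ProbabilityTheory

section helpers

lemma fe_trace {m n : ℕ} (a b : Matrix (Fin m) (Fin n) ℝ) :
    (a * bᵀ).trace = ∑ i, ∑ j, a i j * b i j := by
  simp [Matrix.trace, Matrix.mul_apply]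

/-- bounded measurable functions are in the domain of the mgf. -/
lemma fe_expset {Ω : Type*} [MeasurableSpace Ω] (Q : Measure Ω) [IsProbabilityMeasure Q]
    (Y : Ω → ℝ) (hY : Measurable Y) (B : ℝ) (hB : ∀ᵐ ω ∂Q, |Y ω| ≤ B) :
    (0 : ℝ) ∈ interior (integrableExpSet Y Q) := by
  have : integrableExpSet Y Q = Set.univ := by
    ext s
    simp only [Set.mem_univ, iff_true]
    refine integrable_exp_mul_of_mem_Icc (a := -B) (b := B) hY.aemeasurable ?_
    filter_upwards [hB] with ω hω
    exact abs_le.mp hω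
  simp [this]

lemma fe_exp_int {Ω : Type*} [MeasurableSpace Ω] (Q : Measure Ω) [IsProbabilityMeasure Q]
    (Y : Ω → ℝ) (hY : Measurable Y) (B : ℝ) (hB : ∀ᵐ ω ∂Q, |Y ω| ≤ B) :
    Integrable (fun ω => Real.exp (Y ω)) Q := by
  have := integrable_exp_mul_of_mem_Icc (a := -B) (b := B) (t := 1) (μ := Q) hY.aemeasurable
    (by filter_upwards [hB] with ω hω; exact abs_le.mp hω)
  simpa using this

lemma fe_log {Ω : Type*} [MeasurableSpace Ω] (P : Measure Ω) [IsProbabilityMeasure P]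
    (E Y : Ω → ℝ) (hE : Measurable E) (hY : Measurable Y) (C B : ℝ)
    (hC : ∀ᵐ ω ∂P, |E ω| ≤ C) (hB : ∀ᵐ ω ∂P, |Y ω| ≤ B) (s : ℝ) :
    Real.log (∫ ω, Real.exp (E ω + s * Y ω) ∂P)
      = Real.log (∫ ω, Real.exp (E ω) ∂P) + cgf Y (P.tilted E) s := by
  have h1 := integral_exp_tilted (μ := P) E (fun ω => s * Y ω)
  have hZ : 0 < ∫ ω, Real.exp (E ω) ∂P := integral_exp_pos (fe_exp_int P E hE C hC)
  have hZ' : 0 < ∫ ω, Real.exp ((E + fun ω => s * Y ω) ω) ∂P := by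
    refine integral_exp_pos (fe_exp_int P _ (hE.add (hY.const_mul s)) (C + |s| * B) ?_)
    filter_upwards [hC, hB] with ω h1 h2
    refine (abs_add_le _ _).trans (add_le_add h1 ?_)
    rw [abs_mul]
    exact mul_le_mul_of_nonneg_left h2 (abs_nonneg _)
  rw [cgf, mgf, h1, Real.log_div hZ'.ne' hZ.ne']
  simp

lemma fe_deriv1 {Ω : Type*} [MeasurableSpace Ω] (Q : Measure Ω) [IsProbabilityMeasure Q]
    (Y : Ω → ℝ) (hY : Measurable Y) (B : ℝ) (hB : ∀ᵐ ω ∂Q, |Y ω| ≤ B) :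
    HasDerivAt (cgf Y Q) (∫ ω, Y ω ∂Q) 0 := by
  have h := fe_expset Q Y hY B hB
  have h1 := (analyticAt_cgf h).differentiableAt.hasDerivAt
  rw [deriv_cgf_zero h] at h1
  simpa using h1

lemma fe_deriv2 {Ω : Type*} [MeasurableSpace Ω] (Q : Measure Ω) [IsProbabilityMeasure Q]
    (Y : Ω → ℝ) (hY : Measurable Y) (B : ℝ) (hB : ∀ᵐ ω ∂Q, |Y ω| ≤ B) :
    deriv (deriv (cgf Y Q)) 0 = ∫ ω, (Y ω - ∫ ω', Y ω' ∂Q) ^ 2 ∂Q := by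
  have h := fe_expset Q Y hY B hB
  have h1 := iteratedDeriv_two_cgf_eq_integral h
  rw [iteratedDeriv_succ, iteratedDeriv_one, deriv_cgf_zero h] at h1
  simpa using h1

lemma fe_int {Ω : Type*} [MeasurableSpace Ω] (Q : Measure Ω) [IsProbabilityMeasure Q]
    (Y : Ω → ℝ) (hY : Measurable Y) (B : ℝ) (hB : ∀ᵐ ω ∂Q, |Y ω| ≤ B) : Integrable Y Q :=
  Integrable.of_bound hY.aestronglyMeasurable B (by simpa using hB)

lemma fe_sq {Ω : Type*} [MeasurableSpace Ω] (Q : Measure Ω) [IsProbabilityMeasure Q]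
    (Y : Ω → ℝ) (hY : Measurable Y) (B : ℝ) (hB : ∀ᵐ ω ∂Q, |Y ω| ≤ B) :
    (∫ ω, Y ω ∂Q) ^ 2 ≤ ∫ ω, (Y ω) ^ 2 ∂Q := by
  have h : MemLp Y 2 Q := MemLp.of_bound hY.aestronglyMeasurable B (by simpa using hB)
  have h1 := variance_eq_sub h
  have h2 := variance_nonneg Y Q
  simp only [Pi.pow_apply] at h1
  linarith

lemma fe_psd_closed (D : ℕ) : IsClosed {a : Matrix (Fin D) (Fin D) ℝ | a.PosSemidef} := by
  have : {a : Matrix (Fin D) (Fin D) ℝ | a.PosSemidef}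
      = {a | aᴴ = a} ∩ ⋂ v : Fin D → ℝ, {a | 0 ≤ star v ⬝ᵥ (a *ᵥ v)} := by
    ext a
    simp [Matrix.posSemidef_iff_dotProduct_mulVec, Matrix.IsHermitian]
  rw [this]
  refine IsClosed.inter ?_ (isClosed_iInter fun v => ?_)
  · exact isClosed_eq (by fun_prop) continuous_id
  · exact isClosed_le continuous_const (by fun_prop)

lemma fe_jensen {Ω : Type*} [MeasurableSpace Ω] {D : ℕ} (Q : Measure Ω) [IsProbabilityMeasure Q]
    (R : Ω → Fin D → Fin D → ℝ) (hR : ∀ a b, Measurable fun ω => R ω a b)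
    (hB : ∀ a b, ∀ᵐ ω ∂Q, |R ω a b| ≤ 1) (s : Set (Fin D → Fin D → ℝ)) (hs : IsClosed s)
    (ξ : (Fin D → Fin D → ℝ) → ℝ) (hξ : Continuous ξ) (hconv : ConvexOn ℝ s ξ)
    (hRs : ∀ᵐ ω ∂Q, R ω ∈ s) (hξI : Integrable (fun ω => ξ (R ω)) Q)
    (g : Fin D → Fin D → ℝ) (hg : ∀ a b, g a b = ∫ ω, R ω a b ∂Q) :
    g ∈ s ∧ ξ g ≤ ∫ ω, ξ (R ω) ∂Q := by
  have hI : ∀ a b, Integrable (fun ω => R ω a b) Q := fun a b => fe_int Q _ (hR a b) 1 (hB a b)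
  have hI1 : ∀ a, Integrable (fun ω => (R ω a : Fin D → ℝ)) Q :=
    fun a => Integrable.of_eval (hI a)
  have hI2 : Integrable R Q := Integrable.of_eval (f := R) hI1
  have hgm : g = ∫ ω, R ω ∂Q := by
    ext a b
    have h1 := eval_integral (f := R) (μ := Q) (fun i => hI1 i) a
    have h2 := eval_integral (f := fun ω => (R ω a : Fin D → ℝ)) (μ := Q) (fun i => hI a i) b
    rw [h1, h2, hg]
  rw [hgm]
  exact ⟨hconv.1.integral_mem hs hRs hI2, hconv.map_integral_le hξ.continuousOn hs hRs hI2 hξI⟩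

lemma fe_core {Ω : Type*} [MeasurableSpace Ω] {D : ℕ}
    (Q : Measure Ω) [IsProbabilityMeasure Q]
    (R : Ω → Matrix (Fin D) (Fin D) ℝ) (hR : ∀ a b, Measurable fun ω => R ω a b)
    (hpsd : ∀ᵐ ω ∂Q, (R ω).PosSemidef)
    (hnorm : ∀ᵐ ω ∂Q, ∑ a, ∑ b, R ω a b * R ω a b ≤ 1)
    (ξ : Matrix (Fin D) (Fin D) ℝ → ℝ) (hξ : Continuous ξ)
    (hξm : Measurable fun ω => ξ (R ω)) (B : ℝ) (hξB : ∀ᵐ ω ∂Q, |ξ (R ω)| ≤ B)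
    (hconv : ConvexOn ℝ {a : Matrix (Fin D) (Fin D) ℝ | a.PosSemidef} ξ)
    (L : ℝ) (hL : 0 ≤ L)
    (hLip : ∀ a b : Matrix (Fin D) (Fin D) ℝ, a.PosSemidef → b.PosSemidef →
      Real.sqrt ((a * aᵀ).trace) ≤ 1 → Real.sqrt ((b * bᵀ).trace) ≤ 1 →
        |ξ a - ξ b| ≤ L * Real.sqrt (((a - b) * (a - b)ᵀ).trace))
    (g : Matrix (Fin D) (Fin D) ℝ) (hg : ∀ a b, g a b = ∫ ω, R ω a b ∂Q) :
    ξ g ≤ ∫ ω, ξ (R ω) ∂Q ∧ (∫ ω, ξ (R ω) ∂Q) - ξ g ≤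
      L * Real.sqrt (∫ ω, ∑ a, ∑ b, (R ω a b - g a b) * (R ω a b - g a b) ∂Q) := by
  have hB : ∀ a b, ∀ᵐ ω ∂Q, |R ω a b| ≤ 1 := by
    intro a b
    filter_upwards [hnorm] with ω hω
    have h1 : R ω a b * R ω a b ≤ ∑ b, R ω a b * R ω a b :=
      Finset.single_le_sum (f := fun b => R ω a b * R ω a b)
        (fun i _ => mul_self_nonneg _) (Finset.mem_univ b)
    have h2 : ∑ b, R ω a b * R ω a b ≤ ∑ a, ∑ b, R ω a b * R ω a b :=
      Finset.single_le_sum (f := fun a => ∑ b, R ω a b * R ω a b)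
        (fun i _ => Finset.sum_nonneg fun _ _ => mul_self_nonneg _) (Finset.mem_univ a)
    rw [abs_le_one_iff_mul_self_le_one]
    linarith
  have hξI : Integrable (fun ω => ξ (R ω)) Q := fe_int Q _ hξm B hξB
  obtain ⟨hgpsd, hJ⟩ : g.PosSemidef ∧ ξ g ≤ ∫ ω, ξ (R ω) ∂Q :=
    fe_jensen Q R hR hB {a : Matrix (Fin D) (Fin D) ℝ | a.PosSemidef} (fe_psd_closed D) ξ hξ
      hconv hpsd hξI g hg
  have hRI : ∀ a b, Integrable (fun ω => R ω a b) Q := fun a b => fe_int Q _ (hR a b) 1 (hB a b)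
  have hRI2 : ∀ a b, Integrable (fun ω => R ω a b * R ω a b) Q := fun a b =>
    fe_int Q _ ((hR a b).mul (hR a b)) 1 (by
      filter_upwards [hB a b] with ω hω
      rw [abs_mul]
      nlinarith [abs_nonneg (R ω a b)])
  have hgnorm : ∑ a, ∑ b, g a b * g a b ≤ 1 := by
    calc ∑ a, ∑ b, g a b * g a b ≤ ∑ a, ∑ b, ∫ ω, R ω a b * R ω a b ∂Q := by
          refine Finset.sum_le_sum fun a _ => Finset.sum_le_sum fun b _ => ?_
          have := fe_sq Q _ (hR a b) 1 (hB a b)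
          rw [hg]
          simpa only [pow_two] using this
      _ = ∫ ω, ∑ a, ∑ b, R ω a b * R ω a b ∂Q := by
          rw [integral_finsetSum _ fun a _ => integrable_finsetSum _ fun b _ => hRI2 a b]
          refine Finset.sum_congr rfl fun a _ => ?_
          rw [integral_finsetSum _ fun b _ => hRI2 a b]
      _ ≤ ∫ ω, (1 : ℝ) ∂Q := by
          refine integral_mono_ae ?_ (integrable_const _) hnorm
          exact integrable_finsetSum _ fun a _ => integrable_finsetSum _ fun b _ => hRI2 a b
      _ = 1 := by simp
  refine ⟨hJ, ?_⟩
  · set V : Ω → ℝ := fun ω => ∑ a, ∑ b, (R ω a b - g a b) * (R ω a b - g a b) with hV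
    have hV0 : ∀ ω, 0 ≤ V ω := fun ω =>
      Finset.sum_nonneg fun _ _ => Finset.sum_nonneg fun _ _ => mul_self_nonneg _
    have hVm : Measurable V := by
      refine Finset.measurable_fun_sum _ fun a _ => Finset.measurable_fun_sum _ fun b _ => ?_
      exact ((hR a b).sub_const _).mul ((hR a b).sub_const _)
    have hVB : ∀ᵐ ω ∂Q, V ω ≤ 4 := by
      filter_upwards [hnorm] with ω hω
      have : V ω ≤ ∑ a, ∑ b, (2 * (R ω a b * R ω a b) + 2 * (g a b * g a b)) := by
        refine Finset.sum_le_sum fun a _ => Finset.sum_le_sum fun b _ => ?_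
        nlinarith [sq_nonneg (R ω a b + g a b)]
      simp only [Finset.sum_add_distrib, ← Finset.mul_sum] at this
      linarith
    have hSm : Measurable fun ω => Real.sqrt (V ω) := hVm.sqrt
    have hSB : ∀ᵐ ω ∂Q, |Real.sqrt (V ω)| ≤ 2 := by
      filter_upwards [hVB] with ω hω
      rw [abs_of_nonneg (Real.sqrt_nonneg _)]
      exact Real.sqrt_le_iff.mpr ⟨by norm_num, by linarith⟩
    have hS := fe_sq Q _ hSm 2 hSB
    have hSI := fe_int Q _ hSm 2 hSB
    have e1 : ∫ ω, (Real.sqrt (V ω)) ^ 2 ∂Q = ∫ ω, V ω ∂Q :=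
      integral_congr_ae (Filter.Eventually.of_forall fun ω => Real.sq_sqrt (hV0 ω))
    rw [e1] at hS
    calc (∫ ω, ξ (R ω) ∂Q) - ξ g = ∫ ω, (ξ (R ω) - ξ g) ∂Q := by
          rw [integral_sub hξI (integrable_const _)]; simp
      _ ≤ ∫ ω, L * Real.sqrt (V ω) ∂Q := by
          refine integral_mono_ae (hξI.sub (integrable_const _)) (hSI.const_mul L) ?_
          filter_upwards [hpsd, hnorm] with ω h1 h2
          have := hLip (R ω) g h1 hgpsd
            (by rw [fe_trace]; exact Real.sqrt_le_one.mpr h2)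
            (by rw [fe_trace]; exact Real.sqrt_le_one.mpr hgnorm)
          rw [fe_trace] at this
          exact (le_abs_self _).trans this
      _ = L * ∫ ω, Real.sqrt (V ω) ∂Q := integral_const_mul _ _
      _ ≤ L * Real.sqrt (∫ ω, V ω ∂Q) :=
          mul_le_mul_of_nonneg_left (Real.le_sqrt_of_sq_le hS) hL

lemma fe_parseval {D k : ℕ} (e : Fin k → Matrix (Fin D) (Fin D) ℝ)
    (he2 : ∀ i j, ((e i) * (e j)ᵀ).trace = if i = j then (1 : ℝ) else 0)
    (z : Matrix (Fin D) (Fin D) ℝ) (hz : z ∈ Submodule.span ℝ (Set.range e)) :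
    ∑ i, ((z * (e i)ᵀ).trace) ^ 2 = (z * zᵀ).trace := by
  obtain ⟨c, rfl⟩ := (Submodule.mem_span_range_iff_exists_fun ℝ).mp hz
  have h1 : ∀ i, ((∑ j, c j • e j) * (e i)ᵀ).trace = c i := by
    intro i
    simp [Finset.sum_mul, Matrix.trace_sum, he2]
  simp only [h1]
  rw [Matrix.transpose_sum, Finset.mul_sum, Matrix.trace_sum]
  refine Finset.sum_congr rfl fun i _ => ?_
  rw [Matrix.transpose_smul, Matrix.mul_smul, Matrix.trace_smul, h1, smul_eq_mul, pow_two]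

lemma fe_L {D : ℕ} (hD : 1 ≤ D) (ξ : Matrix (Fin D) (Fin D) ℝ → ℝ) (L : ℝ)
    (hLip : ∀ a b : Matrix (Fin D) (Fin D) ℝ, a.PosSemidef → b.PosSemidef →
      Real.sqrt ((a * aᵀ).trace) ≤ 1 → Real.sqrt ((b * bᵀ).trace) ≤ 1 →
        |ξ a - ξ b| ≤ L * Real.sqrt (((a - b) * (a - b)ᵀ).trace)) : 0 ≤ L := by
  have : NeZero D := ⟨by omega⟩
  let v : Matrix (Fin D) (Fin D) ℝ := Matrix.diagonal (Pi.single 0 1)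
  have hv : (v * vᵀ).trace = 1 := by
    simp [v, Matrix.diagonal_transpose, Matrix.diagonal_mul_diagonal, Matrix.trace_diagonal,
      Pi.single_apply]
  have hp : v.PosSemidef := by
    refine Matrix.PosSemidef.diagonal fun i => ?_
    by_cases h : i = 0
    · subst h; simp
    · simp [h]
  have := hLip v 0 hp Matrix.PosSemidef.zero (by simp [hv]) (by simp)
  simp only [sub_zero, hv, Real.sqrt_one, mul_one] at this
  exact (abs_nonneg _).trans this

lemma fe_supp {D N : ℕ} (hN : 1 ≤ N) (σ : Matrix (Fin D) (Fin N) ℝ)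
    (hσ : ∀ j : Fin N, (∑ i : Fin D, (σ i j) ^ 2) ≤ 1) :
    ((N : ℝ)⁻¹ • (σ * σᵀ)).PosSemidef ∧
    ∑ a, ∑ b, ((N : ℝ)⁻¹ • (σ * σᵀ)) a b * ((N : ℝ)⁻¹ • (σ * σᵀ)) a b ≤ 1 := by
  have hN' : (0 : ℝ) < N := by exact_mod_cast hN
  constructor
  · have := (Matrix.posSemidef_self_mul_conjTranspose σ)
    rw [Matrix.conjTranspose_eq_transpose_of_trivial] at this
    exact this.smul (by positivity)
  · have hT : ∑ a, ∑ j, (σ a j) ^ 2 ≤ N := by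
      rw [Finset.sum_comm]
      calc _ ≤ ∑ j : Fin N, (1 : ℝ) := Finset.sum_le_sum fun j _ => hσ j
        _ = N := by simp
    have hT0 : 0 ≤ ∑ a, ∑ j, (σ a j) ^ 2 :=
      Finset.sum_nonneg fun _ _ => Finset.sum_nonneg fun _ _ => sq_nonneg _
    calc _ = (N : ℝ)⁻¹ ^ 2 * ∑ a, ∑ b, (∑ j, σ a j * σ b j) ^ 2 := by
          rw [Finset.mul_sum]
          refine Finset.sum_congr rfl fun a _ => ?_
          rw [Finset.mul_sum]
          refine Finset.sum_congr rfl fun b _ => ?_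
          simp only [Matrix.smul_apply, Matrix.mul_apply, Matrix.transpose_apply, smul_eq_mul]
          ring
      _ ≤ (N : ℝ)⁻¹ ^ 2 * ∑ a, ∑ b, (∑ j, (σ a j) ^ 2) * (∑ j, (σ b j) ^ 2) := by
          refine mul_le_mul_of_nonneg_left ?_ (by positivity)
          exact Finset.sum_le_sum fun a _ => Finset.sum_le_sum fun b _ =>
            Finset.sum_mul_sq_le_sq_mul_sq _ _ _
      _ = (N : ℝ)⁻¹ ^ 2 * (∑ a, ∑ j, (σ a j) ^ 2) ^ 2 := by
          rw [pow_two (∑ a, ∑ j, (σ a j) ^ 2), Finset.sum_mul_sum]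
      _ ≤ (N : ℝ)⁻¹ ^ 2 * (N : ℝ) ^ 2 := by gcongr
      _ = 1 := by field_simp

lemma fe_intsum {Ω : Type*} [MeasurableSpace Ω] {D : ℕ} (Q : Measure Ω)
    (c : Fin D → Fin D → ℝ) (R : Ω → Fin D → Fin D → ℝ)
    (hRI : ∀ a b, Integrable (fun ω => R ω a b) Q) :
    ∫ ω, ∑ a, ∑ b, c a b * R ω a b ∂Q = ∑ a, ∑ b, c a b * ∫ ω, R ω a b ∂Q := by
  rw [integral_finsetSum _ fun a _ => integrable_finsetSum _ fun b _ =>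
    (hRI a b).const_mul (c a b)]
  refine Finset.sum_congr rfl fun a _ => ?_
  rw [integral_finsetSum _ fun b _ => (hRI a b).const_mul (c a b)]
  exact Finset.sum_congr rfl fun b _ => integral_const_mul _ _

lemma fe_zero {D : ℕ} (f : Fin D → Fin D → ℝ) (h4 : ∑ a, ∑ b, f a b * f a b = 0) :
    ∀ a b, f a b = 0 := by
  intro a b
  rw [Finset.sum_eq_zero_iff_of_nonneg
    fun _ _ => Finset.sum_nonneg fun _ _ => mul_self_nonneg _] at h4
  have h6 := h4 a (Finset.mem_univ a)
  rw [Finset.sum_eq_zero_iff_of_nonneg fun _ _ => mul_self_nonneg _] at h6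
  simpa using h6 b (Finset.mem_univ b)

end helpers

/-- Assume moreover that `ξ` is convex on PSD matrices and `L`-Lipschitz (for
the Frobenius norm) on the PSD matrices of Frobenius norm at most `1`. Then at
every `(t,x) ∈ ℝ × S^D`, writing `g ∈ S^D` for the gradient `∇_x G(t,x)` with
respect to the Frobenius inner product (characterized by the directional
derivatives of `G(t,·)` at `x`), and `Δ_x G(t,x)` for the sum of second
derivatives of `G(t,·)` at `x` along any orthonormal basis `(e_i)` of `S^D`:
`0 ≤ ∂_t G(t,x) − ξ(∇_x G(t,x)) ≤ L (N⁻¹ Δ_x G(t,x))^{1/2}`. -/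
theorem freeEnergy_approx_hj (D N : ℕ) (hD : 1 ≤ D) (hN : 1 ≤ N)
    (P : Measure (Matrix (Fin D) (Fin N) ℝ)) [IsProbabilityMeasure P]
    (hsupp : ∀ᵐ σ ∂P, ∀ j : Fin N, (∑ i : Fin D, (σ i j) ^ 2) ≤ 1)
    (h : Matrix (Fin D) (Fin N) ℝ → ℝ) (hmeas : Measurable h)
    (hbdd : ∃ C : ℝ, ∀ σ, |h σ| ≤ C)
    (ξ : Matrix (Fin D) (Fin D) ℝ → ℝ) (hξ : Continuous ξ)
    (hconv : ConvexOn ℝ {a : Matrix (Fin D) (Fin D) ℝ | a.PosSemidef} ξ)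
    (L : ℝ)
    (hLip : ∀ a b : Matrix (Fin D) (Fin D) ℝ, a.PosSemidef → b.PosSemidef →
      Real.sqrt ((a * aᵀ).trace) ≤ 1 → Real.sqrt ((b * bᵀ).trace) ≤ 1 →
        |ξ a - ξ b| ≤ L * Real.sqrt (((a - b) * (a - b)ᵀ).trace))
    (t : ℝ) (x : Matrix (Fin D) (Fin D) ℝ) (hx : x.IsSymm)
    (g : Matrix (Fin D) (Fin D) ℝ) (hgsymm : g.IsSymm)
    (hg : ∀ y : Matrix (Fin D) (Fin D) ℝ, y.IsSymm →
      HasDerivAt (fun ε : ℝ => freeEnergy P h ξ t (x + ε • y)) ((g * yᵀ).trace) 0)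
    (k : ℕ) (e : Fin k → Matrix (Fin D) (Fin D) ℝ)
    (he1 : ∀ i, (e i).IsSymm)
    (he2 : ∀ i j, ((e i) * (e j)ᵀ).trace = if i = j then (1 : ℝ) else 0)
    (he3 : ∀ z : Matrix (Fin D) (Fin D) ℝ, z.IsSymm → z ∈ Submodule.span ℝ (Set.range e)) :
    0 ≤ deriv (fun s => freeEnergy P h ξ s x) t - ξ g
    ∧ deriv (fun s => freeEnergy P h ξ s x) t - ξ g
        ≤ L * Real.sqrt ((N : ℝ)⁻¹
            * ∑ i : Fin k, deriv (deriv (fun ε : ℝ => freeEnergy P h ξ t (x + ε • e i))) 0) := by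
  have hN' : (0 : ℝ) < N := by exact_mod_cast hN
  have hL := fe_L hD ξ L hLip
  obtain ⟨C, hC⟩ := hbdd
  have : BorelSpace (Matrix (Fin D) (Fin N) ℝ) :=
    inferInstanceAs (BorelSpace (Fin D → Fin N → ℝ))
  set R : Matrix (Fin D) (Fin N) ℝ → Matrix (Fin D) (Fin D) ℝ :=
    fun σ => (N : ℝ)⁻¹ • (σ * σᵀ) with hRdef
  have hRc : Continuous R := by
    rw [hRdef]; fun_prop
  have hRm : ∀ a b, Measurable fun σ => R σ a b := fun a b =>
    (hRc.matrix_elem a b).measurable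
  have hξm : Measurable fun σ => ξ (R σ) := (hξ.comp hRc).measurable
  have hpsdP : ∀ᵐ σ ∂P, (R σ).PosSemidef := by
    filter_upwards [hsupp] with σ hσ using (fe_supp hN σ hσ).1
  have hnormP : ∀ᵐ σ ∂P, ∑ a, ∑ b, R σ a b * R σ a b ≤ 1 := by
    filter_upwards [hsupp] with σ hσ using (fe_supp hN σ hσ).2
  have hξBP : ∀ᵐ σ ∂P, |ξ (R σ)| ≤ |ξ 0| + L := by
    filter_upwards [hpsdP, hnormP] with σ h1 h2
    have hs : Real.sqrt ((R σ * (R σ)ᵀ).trace) ≤ 1 := by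
      rw [fe_trace]; exact Real.sqrt_le_one.mpr h2
    have := hLip (R σ) 0 h1 Matrix.PosSemidef.zero hs (by simp)
    rw [sub_zero] at this
    have h3 : |ξ (R σ)| ≤ |ξ (R σ) - ξ 0| + |ξ 0| := by
      simpa using abs_add_le (ξ (R σ) - ξ 0) (ξ 0)
    nlinarith
  -- the linear observables
  set Y : Matrix (Fin D) (Fin D) ℝ → Matrix (Fin D) (Fin N) ℝ → ℝ :=
    fun y σ => (y * (σ * σᵀ)ᵀ).trace with hYdef
  have hYR : ∀ y σ, Y y σ = N * ∑ a, ∑ b, y a b * R σ a b := by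
    intro y σ
    simp only [hYdef, hRdef, fe_trace, Matrix.smul_apply, smul_eq_mul, Finset.mul_sum]
    refine Finset.sum_congr rfl fun a _ => Finset.sum_congr rfl fun b _ => ?_
    field_simp
  have hYm : ∀ y, Measurable (Y y) := by
    intro y
    have : Continuous (Y y) := by
      simp only [hYdef]; fun_prop
    exact this.measurable
  have hRB : ∀ a b σ, ∑ a, ∑ b, R σ a b * R σ a b ≤ 1 → |R σ a b| ≤ 1 := by
    intro a b σ hω
    have h1 : R σ a b * R σ a b ≤ ∑ b, R σ a b * R σ a b :=
      Finset.single_le_sum (f := fun b => R σ a b * R σ a b)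
        (fun i _ => mul_self_nonneg _) (Finset.mem_univ b)
    have h2 : ∑ b, R σ a b * R σ a b ≤ ∑ a, ∑ b, R σ a b * R σ a b :=
      Finset.single_le_sum (f := fun a => ∑ b, R σ a b * R σ a b)
        (fun i _ => Finset.sum_nonneg fun _ _ => mul_self_nonneg _) (Finset.mem_univ a)
    rw [abs_le_one_iff_mul_self_le_one]
    linarith
  have hYBP : ∀ y, ∀ᵐ σ ∂P, |Y y σ| ≤ N * ∑ a, ∑ b, |y a b| := by
    intro y
    filter_upwards [hnormP] with σ hσ
    rw [hYR, abs_mul, abs_of_pos hN']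
    refine mul_le_mul_of_nonneg_left ?_ hN'.le
    refine (Finset.abs_sum_le_sum_abs _ _).trans (Finset.sum_le_sum fun a _ => ?_)
    refine (Finset.abs_sum_le_sum_abs _ _).trans (Finset.sum_le_sum fun b _ => ?_)
    rw [abs_mul]
    exact mul_le_of_le_one_right (abs_nonneg _) (hRB a b σ hσ)
  -- the energy
  set E : Matrix (Fin D) (Fin N) ℝ → ℝ := energy h ξ t x with hEdef
  have hEeq : ∀ s y σ, energy h ξ s y σ = h σ + s * N * ξ (R σ) + Y y σ := fun s y σ => rfl
  have hEm : Measurable E := by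
    have : E = fun σ => h σ + t * N * ξ (R σ) + Y x σ := funext fun σ => hEeq t x σ
    rw [this]
    exact (hmeas.add (hξm.const_mul _)).add (hYm x)
  have hEB : ∀ᵐ σ ∂P, |E σ| ≤ C + |t * N| * (|ξ 0| + L) + N * ∑ a, ∑ b, |x a b| := by
    filter_upwards [hξBP, hYBP x] with σ h1 h2
    rw [hEdef, hEeq]
    refine (abs_add_le _ _).trans (add_le_add ((abs_add_le _ _).trans (add_le_add (hC σ) ?_)) h2)
    rw [abs_mul]
    exact mul_le_mul_of_nonneg_left h1 (abs_nonneg _)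
  have : IsProbabilityMeasure (P.tilted E) :=
    isProbabilityMeasure_tilted (fe_exp_int P E hEm _ hEB)
  set Q := P.tilted E with hQdef
  have hac : Q ≪ P := tilted_absolutelyContinuous P E
  have hpsd := hac.ae_le hpsdP
  have hnorm := hac.ae_le hnormP
  have hξB := hac.ae_le hξBP
  have hYB : ∀ y, ∀ᵐ σ ∂Q, |Y y σ| ≤ N * ∑ a, ∑ b, |y a b| := fun y => hac.ae_le (hYBP y)
  have hRI : ∀ a b, Integrable (fun σ => R σ a b) Q := by
    intro a b
    refine fe_int Q _ (hRm a b) 1 ?_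
    filter_upwards [hnorm] with σ hσ using hRB a b σ hσ
  -- free energy along lines in x
  have hline : ∀ y, (fun ε : ℝ => freeEnergy P h ξ t (x + ε • y))
      = fun ε => (N : ℝ)⁻¹ * (Real.log (∫ σ, Real.exp (E σ) ∂P) + cgf (Y y) Q ε) := by
    intro y
    funext ε
    rw [← fe_log P E (Y y) hEm (hYm y) _ _ hEB (hYBP y) ε, freeEnergy]
    have : ∀ σ, energy h ξ t (x + ε • y) σ = E σ + ε * Y y σ := by
      intro σ
      rw [hEdef, hEeq, hEeq]
      simp only [hYdef, Matrix.add_mul, Matrix.trace_add, Matrix.smul_mul, Matrix.trace_smul,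
        smul_eq_mul]
      ring
    simp only [this]
  -- free energy in t
  have htime : (fun s : ℝ => freeEnergy P h ξ s x)
      = fun s => (N : ℝ)⁻¹ * (Real.log (∫ σ, Real.exp (E σ) ∂P)
          + cgf (fun σ => N * ξ (R σ)) Q (s - t)) := by
    funext s
    rw [← fe_log P E (fun σ => N * ξ (R σ)) hEm (hξm.const_mul _) _ (N * (|ξ 0| + L)) hEB
      (by
        filter_upwards [hξBP] with σ h1
        rw [abs_mul, abs_of_pos hN']
        exact mul_le_mul_of_nonneg_left h1 hN'.le) (s - t), freeEnergy]
    have : ∀ σ, energy h ξ s x σ = E σ + (s - t) * (N * ξ (R σ)) := by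
      intro σ
      rw [hEdef, hEeq, hEeq]
      ring
    simp only [this]
  have hdt : deriv (fun s => freeEnergy P h ξ s x) t = ∫ σ, ξ (R σ) ∂Q := by
    rw [htime]
    have h1 := fe_deriv1 Q (fun σ => N * ξ (R σ)) (hξm.const_mul _) (N * (|ξ 0| + L))
      (by
        filter_upwards [hξB] with σ h1
        rw [abs_mul, abs_of_pos hN']
        exact mul_le_mul_of_nonneg_left h1 hN'.le)
    rw [← sub_self t] at h1
    have h2 := ((h1.comp_sub_const t t).const_add
      (Real.log (∫ σ, Real.exp (E σ) ∂P))).const_mul (N : ℝ)⁻¹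
    rw [h2.deriv, integral_const_mul]
    field_simp
  -- the mean
  have hYmean : ∀ y, ∫ σ, Y y σ ∂Q = N * ∑ a, ∑ b, y a b * ∫ σ, R σ a b ∂Q := by
    intro y
    simp only [hYR]
    rw [integral_const_mul]
    congr 1
    exact fe_intsum Q y R hRI
  have hRsymm : ∀ σ, (R σ).IsSymm := by
    intro σ
    simp [hRdef, Matrix.IsSymm, Matrix.transpose_smul, Matrix.transpose_mul]
  have hgm : ∀ a b, g a b = ∫ σ, R σ a b ∂Q := by
    set m : Matrix (Fin D) (Fin D) ℝ := Matrix.of fun a b => ∫ σ, R σ a b ∂Q with hm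
    have hmsymm : m.IsSymm := by
      ext a b
      simp only [hm, Matrix.transpose_apply, Matrix.of_apply]
      congr 1
      funext σ
      exact (hRsymm σ).apply a b
    have hy : (g - m).IsSymm := hgsymm.sub hmsymm
    have h1 := hg _ hy
    rw [hline] at h1
    have h2 := ((fe_deriv1 Q (Y (g - m)) (hYm _) _ (hYB _)).const_add
      (Real.log (∫ σ, Real.exp (E σ) ∂P))).const_mul (N : ℝ)⁻¹
    have h3 := h1.unique h2
    rw [hYmean, inv_mul_cancel_left₀ hN'.ne'] at h3
    have h4 : ((g - m) * (g - m)ᵀ).trace = 0 := by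
      rw [Matrix.sub_mul, Matrix.trace_sub, h3, fe_trace, sub_eq_zero]
      exact Finset.sum_congr rfl fun a _ => Finset.sum_congr rfl fun b _ => mul_comm _ _
    have h5 : g - m = 0 := by
      rw [fe_trace] at h4
      ext a b
      exact fe_zero (g - m) h4 a b
    intro a b
    rw [sub_eq_zero.mp h5, hm, Matrix.of_apply]
  -- the Laplacian
  have hd2 : ∀ i, deriv (deriv (fun ε : ℝ => freeEnergy P h ξ t (x + ε • e i))) 0
      = N * ∫ σ, (((R σ - g) * (e i)ᵀ).trace) ^ 2 ∂Q := by
    intro i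
    rw [hline]
    have h1 : deriv (fun ε => (N : ℝ)⁻¹ *
        (Real.log (∫ σ, Real.exp (E σ) ∂P) + cgf (Y (e i)) Q ε))
        = fun ε => (N : ℝ)⁻¹ * deriv (cgf (Y (e i)) Q) ε := by
      funext ε
      rw [deriv_const_mul_field, deriv_const_add]
    rw [h1, deriv_const_mul_field, fe_deriv2 Q (Y (e i)) (hYm _) _ (hYB _), hYmean]
    have h2 : ∀ σ, (Y (e i) σ - N * ∑ a, ∑ b, e i a b * ∫ σ, R σ a b ∂Q) ^ 2
        = (N : ℝ) ^ 2 * (((R σ - g) * (e i)ᵀ).trace) ^ 2 := by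
      intro σ
      rw [hYR, fe_trace, ← mul_sub, mul_pow]
      congr 2
      simp only [← hgm, ← Finset.sum_sub_distrib, Matrix.sub_apply]
      exact Finset.sum_congr rfl fun a _ => Finset.sum_congr rfl fun b _ => by ring
    simp only [h2]
    rw [integral_const_mul]
    field_simp
  have hlap : (N : ℝ)⁻¹ * ∑ i : Fin k,
      deriv (deriv (fun ε : ℝ => freeEnergy P h ξ t (x + ε • e i))) 0
      = ∫ σ, ∑ a, ∑ b, (R σ a b - g a b) * (R σ a b - g a b) ∂Q := by
    simp only [hd2]
    rw [← Finset.mul_sum, inv_mul_cancel_left₀ hN'.ne', ← integral_finsetSum]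
    · congr 1
      funext σ
      rw [fe_parseval e he2 _ (he3 _ ((hRsymm σ).sub hgsymm)), fe_trace]
      simp only [Matrix.sub_apply]
    · intro i _
      have hm : Measurable fun σ => (((R σ - g) * (e i)ᵀ).trace) ^ 2 := by
        have : Continuous fun σ => (((R σ - g) * (e i)ᵀ).trace) ^ 2 := by fun_prop
        exact this.measurable
      refine fe_int Q _ hm ((∑ a, ∑ b, (1 + |g a b|) * |e i a b|) ^ 2) ?_
      filter_upwards [hnorm] with σ hσ
      rw [abs_pow]
      refine pow_le_pow_left₀ (abs_nonneg _) ?_ 2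
      rw [fe_trace]
      refine (Finset.abs_sum_le_sum_abs _ _).trans (Finset.sum_le_sum fun a _ => ?_)
      refine (Finset.abs_sum_le_sum_abs _ _).trans (Finset.sum_le_sum fun b _ => ?_)
      rw [abs_mul, Matrix.sub_apply]
      refine mul_le_mul_of_nonneg_right ?_ (abs_nonneg _)
      exact (abs_sub _ _).trans (by linarith [hRB a b σ hσ])
  have hcore := fe_core Q R hRm hpsd hnorm ξ hξ hξm _ hξB hconv L hL hLip g hgm
  rw [hlap, hdt]
  exact ⟨sub_nonneg.mpr hcore.1, hcore.2⟩
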